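/- Let L ≥ 2 and θ ∈ ℝ. The perturbation operator H_pert(θ) = U_KT H_BLBQ(θ) U_KT − H_BLBQ(θ) satisfies the exact identity H_pert(θ) = −cosθ Σ_{j=1}^{L−1}(σˣ_jσˣ_{j+1} + σʸ_jσʸ_{j+1}) − 2cosθ Σ_{j=1}^{L−1}( |↑h⟩⟨h↑| + |↓h⟩⟨h↓| + |h↑⟩⟨↑h| + |h↓⟩⟨↓h| )_{j,j+1} − 2(cosθ−sinθ) Σ_{j=1}^{L−1}( |↑↑⟩⟨hh| + |↓↓⟩⟨hh| + |hh⟩⟨↑↑| + |hh⟩⟨↓↓| )_{j,j+1}, where ( · )_{j,j+1} denotes the indicated two-site operator acting on sites j and j+1 and identity elsewhere. -/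

import Mathlib

noncomputable section
open Complex Matrix

/-- The Hilbert space operators of the `L`-site spin-1 chain: matrices on `(ℂ³)^{⊗L}`,
with the tensor factors indexed by sites and the single-site ordered basis `(|+⟩,|0⟩,|−⟩)`. -/
abbrev Op (L : ℕ) : Type := Matrix (Fin L → Fin 3) (Fin L → Fin 3) ℂ

/-- The spin-1 matrix `Sˣ`. -/
def Sx : Matrix (Fin 3) (Fin 3) ℂ :=
  ((Real.sqrt 2 : ℝ) : ℂ)⁻¹ • !![0, 1, 0; 1, 0, 1; 0, 1, 0]

/-- The spin-1 matrix `Sʸ`. -/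
def Sy : Matrix (Fin 3) (Fin 3) ℂ :=
  ((Real.sqrt 2 : ℝ) : ℂ)⁻¹ • !![0, -I, 0; I, 0, -I; 0, I, 0]

/-- The spin-1 matrix `Sᶻ = diag(1,0,−1)`. -/
def Sz : Matrix (Fin 3) (Fin 3) ℂ := !![1, 0, 0; 0, 0, 0; 0, 0, -1]

/-- `site A j` is the one-site operator `A` acting on site `j` and identity elsewhere. -/
def site {L : ℕ} (A : Matrix (Fin 3) (Fin 3) ℂ) (j : Fin L) : Op L :=
  Matrix.of fun f g => ∏ k : Fin L, if k = j then A (f k) (g k) else (if f k = g k then 1 else 0)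

/-- One factor `exp(iπ Sᶻ_u Sˣ_v)` of the Kennedy–Tasaki transformation. -/
def ktFactor {L : ℕ} (u v : Fin L) : Op L :=
  NormedSpace.exp (((Real.pi : ℂ) * I) • (site Sz u * site Sx v))

/-- The Kennedy–Tasaki transformation `U_KT = ∏_{1 ≤ u < v ≤ L} exp(iπ Sᶻ_u Sˣ_v)`
(the factors pairwise commute, so the ordering is immaterial). -/
def UKT (L : ℕ) : Op L :=
  ((List.finRange L).map fun u =>
    ((List.finRange L).map fun v => if u < v then ktFactor u v else 1).prod).prod

/-- The p-wave basis vector `|↑⟩ = (|+⟩ − |−⟩)/√2`. -/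
def up : Fin 3 → ℂ := ![((Real.sqrt 2 : ℝ) : ℂ)⁻¹, 0, -((Real.sqrt 2 : ℝ) : ℂ)⁻¹]

/-- The p-wave basis vector `|↓⟩ = |0⟩`. -/
def down : Fin 3 → ℂ := ![0, 1, 0]

/-- The p-wave basis vector `|h⟩ = (|+⟩ + |−⟩)/√2`. -/
def hole : Fin 3 → ℂ := ![((Real.sqrt 2 : ℝ) : ℂ)⁻¹, 0, ((Real.sqrt 2 : ℝ) : ℂ)⁻¹]

/-- The rank-one operator `|a⟩⟨b|`. -/
def ketbra (a b : Fin 3 → ℂ) : Matrix (Fin 3) (Fin 3) ℂ := Matrix.vecMulVec a (star b)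

/-- `σˣ = |↑⟩⟨↓| + |↓⟩⟨↑|` (annihilating `|h⟩`). -/
def sigx : Matrix (Fin 3) (Fin 3) ℂ := ketbra up down + ketbra down up

/-- `σʸ = −i|↑⟩⟨↓| + i|↓⟩⟨↑|` (annihilating `|h⟩`). -/
def sigy : Matrix (Fin 3) (Fin 3) ℂ := (-I) • ketbra up down + I • ketbra down up

/-- `σᶻ = |↑⟩⟨↑| − |↓⟩⟨↓|` (annihilating `|h⟩`). -/
def sigz : Matrix (Fin 3) (Fin 3) ℂ := ketbra up up - ketbra down down

/-- `n = |↑⟩⟨↑| + |↓⟩⟨↓|` (annihilating `|h⟩`). -/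
def nMat : Matrix (Fin 3) (Fin 3) ℂ := ketbra up up + ketbra down down

/-- `h = |h⟩⟨h|`. -/
def hMat : Matrix (Fin 3) (Fin 3) ℂ := ketbra hole hole

/-- `P = ⊗_{j=1}^L n_j`, the orthogonal projection onto the hole-free subspace. -/
def Pproj (L : ℕ) : Op L := Matrix.of fun f g => ∏ k : Fin L, nMat (f k) (g k)

/-- The Heisenberg coupling `S_j · S_k`. -/
def heis {L : ℕ} (j k : Fin L) : Op L :=
  site Sx j * site Sx k + site Sy j * site Sy k + site Sz j * site Sz k

/-- The bilinear-biquadratic Hamiltonian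
`H_BLBQ(θ) = Σ_{j=1}^{L−1} [cosθ (S_j·S_{j+1}) + sinθ (S_j·S_{j+1})²]`. -/
def HBLBQ (L : ℕ) (θ : ℝ) : Op L :=
  ∑ j : Fin L, if h : (j : ℕ) + 1 < L then
    ((Real.cos θ : ℝ) : ℂ) • heis j ⟨(j : ℕ) + 1, h⟩
      + ((Real.sin θ : ℝ) : ℂ) • (heis j ⟨(j : ℕ) + 1, h⟩) ^ 2
  else 0

/-- The self-dual Hamiltonian `H_SD(θ) = H_BLBQ(θ) + U_KT H_BLBQ(θ) U_KT`. -/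
def HSD (L : ℕ) (θ : ℝ) : Op L := HBLBQ L θ + UKT L * HBLBQ L θ * UKT L

/-- The spin-1/2 XXZ Hamiltonian written in the p-wave basis:
`H_XXZ(θ) = (cosθ−sinθ) Σ_j (−σˣ_jσˣ_{j+1} + σʸ_jσʸ_{j+1}) + sinθ Σ_j σᶻ_jσᶻ_{j+1}`. -/
def HXXZ (L : ℕ) (θ : ℝ) : Op L :=
  ((Real.cos θ - Real.sin θ : ℝ) : ℂ) •
    (∑ j : Fin L, if h : (j : ℕ) + 1 < L then
      -(site sigx j * site sigx ⟨(j : ℕ) + 1, h⟩) + site sigy j * site sigy ⟨(j : ℕ) + 1, h⟩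
    else 0)
  + ((Real.sin θ : ℝ) : ℂ) •
    (∑ j : Fin L, if h : (j : ℕ) + 1 < L then
      site sigz j * site sigz ⟨(j : ℕ) + 1, h⟩
    else 0)

/-- The global product `∏_{j=1}^L exp(c • A_j)` of commuting single-site exponentials. -/
def globalProd (L : ℕ) (A : Matrix (Fin 3) (Fin 3) ℂ) (c : ℂ) : Op L :=
  ((List.finRange L).map fun j => NormedSpace.exp (c • site A j)).prod

/-- The symmetry flux `F^y_j = exp(−iπ Σ_{k<j} Sʸ_k) · Sʸ_j`. -/
def fluxY (L : ℕ) (j : Fin L) : Op L :=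
  NormedSpace.exp ((-((Real.pi : ℂ) * I)) •
    ∑ k : Fin L, if (k : ℕ) < (j : ℕ) then site Sy k else 0) * site Sy j

/-!
In the p-wave basis `Sᶻ` exchanges `|↑⟩, |h⟩` and kills `|↓⟩`, while `Sˣ` exchanges `|↓⟩, |h⟩` and
kills `|↑⟩`. Hence `A = Sᶻ_u Sˣ_v` satisfies `A³ = A`, and `exp(iπA) = 1 - 2A²` is a diagonal sign
`χ(f u, f v)` in the product p-wave basis; `U_KT` is the product of these signs over `u < v`.
On a bond, `S_i·S_j = P - K` and `(S_i·S_j)² = 1 + K`, where `P` exchanges the two sites and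
`K = |s⟩⟨s|` for the singlet `s = |↑↑⟩ + |↓↓⟩ - |hh⟩`. These operators only connect pairs of p-wave
states that interact with all other sites through the same sign, so conjugating a bond by `U_KT`
amounts to conjugating it by its own `χ`. This flips the sign of all off-diagonal entries of `P`,
and the sign of `|hh⟩` in `s`.
-/

open scoped Kronecker

lemma kronecker_pow {m n R : Type*} [Fintype m] [DecidableEq m] [Fintype n] [DecidableEq n]
    [CommSemiring R] (A : Matrix m m R) (B : Matrix n n R) (k : ℕ) :
    (A ⊗ₖ B) ^ k = (A ^ k) ⊗ₖ (B ^ k) := by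
  induction k with
  | zero => simp
  | succ k ih => rw [pow_succ, pow_succ, pow_succ, ih, mul_kronecker_mul]

section Exponential

variable {𝔸 : Type*} [NormedRing 𝔸] [NormedAlgebra ℂ 𝔸] [CompleteSpace 𝔸]

lemma pow_two_mul_add_one_of_pow_three_eq_self {M : Type*} [Monoid M] {a : M} (ha : a ^ 3 = a)
    (n : ℕ) : a ^ (2 * n + 1) = a := by
  induction n with
  | zero => simp
  | succ n ih => rw [show 2 * (n + 1) + 1 = (2 * n + 1) + 2 by ring, pow_add, ih, ← pow_succ', ha]

lemma exp_smul_of_pow_three_eq_self {a : 𝔸} (ha : a ^ 3 = a) (z : ℂ) :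
    NormedSpace.exp (z • a) = 1 + sinh z • a + (cosh z - 1) • a ^ 2 := by
  have even_terms (n : ℕ) : ((2 * n).factorial : ℂ)⁻¹ • (z • a) ^ (2 * n) =
      (if n = 0 then 1 - a ^ 2 else 0) + (z ^ (2 * n) / (2 * n).factorial) • a ^ 2 := by
    cases n with
    | zero => simp
    | succ n =>
      have a_pow : a ^ (2 * (n + 1)) = a ^ 2 := by
        rw [show 2 * (n + 1) = (2 * n + 1) + 1 by ring, pow_succ,
          pow_two_mul_add_one_of_pow_three_eq_self ha, pow_two]
      rw [smul_pow, a_pow, smul_smul, div_eq_inv_mul, if_neg n.succ_ne_zero, zero_add]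
  have odd_terms (n : ℕ) : ((2 * n + 1).factorial : ℂ)⁻¹ • (z • a) ^ (2 * n + 1) =
      (z ^ (2 * n + 1) / (2 * n + 1).factorial) • a := by
    rw [smul_pow, pow_two_mul_add_one_of_pow_three_eq_self ha, smul_smul, div_eq_inv_mul]
  have even_sum := (hasSum_ite_eq 0 (1 - a ^ 2)).add ((hasSum_cosh z).smul_const (a ^ 2))
  have odd_sum := (hasSum_sinh z).smul_const a
  simp only [← even_terms] at even_sum
  simp only [← odd_terms] at odd_sum
  rw [(NormedSpace.exp_series_hasSum_exp' (𝕂 := ℂ) (z • a)).unique (even_sum.even_add_odd odd_sum)]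
  module

lemma exp_pi_mul_I_smul_of_pow_three_eq_self {a : 𝔸} (ha : a ^ 3 = a) :
    NormedSpace.exp ((Real.pi * I : ℂ) • a) = 1 - (2 : ℂ) • a ^ 2 := by
  rw [exp_smul_of_pow_three_eq_self ha, sinh_mul_I, cosh_mul_I, Complex.sin_pi, Complex.cos_pi]
  module

end Exponential

section TensorProduct

variable {ι n R : Type*} [Fintype ι] [CommSemiring R]

/-- The tensor product `⨂ₖ Aₖ` of a finite family of square matrices, as a matrix indexed by
configurations `ι → n`. -/
def tensorMatrix (A : ι → Matrix n n R) : Matrix (ι → n) (ι → n) R :=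
  of fun f g => ∏ k, A k (f k) (g k)

lemma tensorMatrix_mul [DecidableEq ι] [Fintype n] (A B : ι → Matrix n n R) :
    tensorMatrix (A * B) = tensorMatrix A * tensorMatrix B := by
  ext f g
  simp only [tensorMatrix, mul_apply, of_apply, Pi.mul_apply, Finset.prod_univ_sum,
    Fintype.piFinset_univ, Finset.prod_mul_distrib]

lemma tensorMatrix_one [DecidableEq n] : tensorMatrix (1 : ι → Matrix n n R) = 1 := by
  ext f g
  simp only [tensorMatrix, of_apply, Pi.one_apply, one_apply, Fintype.prod_ite_zero, funext_iff,
    Finset.prod_const_one]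

lemma star_tensorMatrix [StarRing R] (A : ι → Matrix n n R) :
    star (tensorMatrix A) = tensorMatrix (star A) := by
  ext f g
  simp [tensorMatrix, star_apply]

lemma tensorMatrix_mem_unitary [DecidableEq ι] [Fintype n] [DecidableEq n] [StarRing R]
    {A : ι → Matrix n n R} (hA : A ∈ unitary (ι → Matrix n n R)) :
    tensorMatrix A ∈ unitary (Matrix (ι → n) (ι → n) R) := by
  rw [Unitary.mem_iff] at hA ⊢
  simp only [star_tensorMatrix, ← tensorMatrix_mul, hA, tensorMatrix_one, and_self]

end TensorProduct

section TwoSite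

lemma eqOff_and_pair_eq_iff {ι n : Type*} {i j : ι} {f g : ι → n} :
    (∀ k, k ≠ i → k ≠ j → f k = g k) ∧ (f i, f j) = (g i, g j) ↔ f = g := by
  refine ⟨fun ⟨hoff, hpair⟩ => funext fun k => ?_, by rintro rfl; simp⟩
  obtain ⟨hi, hj⟩ := Prod.mk.inj hpair
  rcases eq_or_ne k i with rfl | hki
  · exact hi
  rcases eq_or_ne k j with rfl | hkj
  · exact hj
  exact hoff k hki hkj

variable {ι n R : Type*} [Fintype ι] [DecidableEq ι] [DecidableEq n] [CommSemiring R] {i j : ι}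

/-- The matrix on configurations `ι → n` that acts as `X` on the sites `i`, `j` and as the identity
on every other site; for `i ≠ j` this is an algebra homomorphism in `X`, see `twoSite`. -/
def twoSiteMatrix (i j : ι) (X : Matrix (n × n) (n × n) R) : Matrix (ι → n) (ι → n) R :=
  of fun f g => if ∀ k, k ≠ i → k ≠ j → f k = g k then X (f i, f j) (g i, g j) else 0

lemma twoSiteMatrix_diagonal (d : n × n → R) :
    twoSiteMatrix i j (diagonal d) = diagonal fun f : ι → n => d (f i, f j) := by
  ext f g
  simp only [twoSiteMatrix, of_apply, diagonal_apply, ← ite_and, eqOff_and_pair_eq_iff]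

lemma twoSiteMatrix_mul [Fintype n] (hij : i ≠ j) (X Y : Matrix (n × n) (n × n) R) :
    twoSiteMatrix i j (X * Y) = twoSiteMatrix i j X * twoSiteMatrix i j Y := by
  ext f g
  let insertPair (p : n × n) : ι → n := Function.update (Function.update f i p.1) j p.2
  have insertPair_pair (p : n × n) : (insertPair p i, insertPair p j) = p := by
    simp [insertPair, hij]
  have insertPair_of_ne (p : n × n) {k : ι} (hki : k ≠ i) (hkj : k ≠ j) :
      insertPair p k = f k := by
    simp [insertPair, hki, hkj]
  have insertPair_eq {e : ι → n} (he : ∀ k, k ≠ i → k ≠ j → f k = e k) :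
      insertPair (e i, e j) = e :=
    eqOff_and_pair_eq_iff.mp
      ⟨fun k hki hkj => (insertPair_of_ne _ hki hkj).trans (he k hki hkj), insertPair_pair _⟩
  have insertPair_injective : Function.Injective insertPair :=
    Function.LeftInverse.injective (g := fun e : ι → n => (e i, e j)) insertPair_pair
  trans ∑ p, if ∀ k, k ≠ i → k ≠ j → f k = g k then X (f i, f j) p * Y p (g i, g j) else 0
  · simp only [twoSiteMatrix, of_apply, mul_apply, Finset.sum_ite_irrel, Finset.sum_const_zero]
  refine Fintype.sum_of_injective insertPair insertPair_injective _ _ ?_ ?_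
  · intro e he
    have hfe : ¬ ∀ k, k ≠ i → k ≠ j → f k = e k := fun hfe => he ⟨_, insertPair_eq hfe⟩
    simp only [twoSiteMatrix, of_apply, if_neg hfe, zero_mul]
  · intro p
    simp +contextual [twoSiteMatrix, insertPair_pair, insertPair_of_ne]

/-- The algebra homomorphism `X ↦ X_{i,j}` that lets a two-site operator act on the sites
`i ≠ j`. -/
def twoSite [Fintype n] (hij : i ≠ j) :
    Matrix (n × n) (n × n) R →ₐ[R] Matrix (ι → n) (ι → n) R where
  toFun := twoSiteMatrix i j
  map_one' := twoSiteMatrix_diagonal 1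
  map_mul' := twoSiteMatrix_mul hij
  map_zero' := by ext; simp [twoSiteMatrix]
  map_add' X Y := by ext; simp [twoSiteMatrix, ite_add_ite]
  commutes' r := by
    rw [algebraMap_eq_diagonal, twoSiteMatrix_diagonal, algebraMap_eq_diagonal]
    rfl

lemma twoSite_apply [Fintype n] (hij : i ≠ j) (X : Matrix (n × n) (n × n) R) (f g : ι → n) :
    twoSite hij X f g =
      if ∀ k, k ≠ i → k ≠ j → f k = g k then X (f i, f j) (g i, g j) else 0 :=
  rfl

lemma twoSite_diagonal [Fintype n] (hij : i ≠ j) (d : n × n → R) :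
    twoSite hij (diagonal d) = diagonal fun f : ι → n => d (f i, f j) :=
  twoSiteMatrix_diagonal d

lemma twoSite_kronecker [Fintype n] (hij : i ≠ j) (A B : Matrix n n R) :
    twoSite hij (A ⊗ₖ B) = tensorMatrix (Pi.mulSingle i A * Pi.mulSingle j B) := by
  ext f g
  rw [twoSite_apply, tensorMatrix, of_apply]
  split_ifs with h
  · rw [Fintype.prod_eq_mul i j hij]
    · simp [hij, hij.symm]
    · rintro k ⟨hki, hkj⟩
      simp [hki, hkj, h k hki hkj]
  · push Not at h
    obtain ⟨k, hki, hkj, hfg⟩ := h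
    exact (Finset.prod_eq_zero (Finset.mem_univ k) (by simp [hki, hkj, hfg])).symm

end TwoSite

section PairWeight

variable {ι α M : Type*} [CommGroup M]

/-- The product of the pair interaction `χ` over all ordered pairs of sites `u < v`. -/
def pairWeight [Fintype ι] [LinearOrder ι] (χ : α → α → M) (f : ι → α) : M :=
  ∏ u, ∏ v, if u < v then χ (f u) (f v) else 1

/-- Two pairs of labels have the same charge for `χ` if every further label interacts equally with
both pairs, on either side. -/
def SameCharge (χ : α → α → M) (p q : α × α) : Prop :=
  ∀ e, χ e p.1 * χ e p.2 = χ e q.1 * χ e q.2 ∧ χ p.1 e * χ p.2 e = χ q.1 e * χ q.2 e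

lemma sameCharge_swap (χ : α → α → M) (p : α × α) : SameCharge χ p p.swap :=
  fun _ => ⟨mul_comm _ _, mul_comm _ _⟩

lemma sameCharge_diagonal (χ : α → α → ℤˣ) (a b : α) : SameCharge χ (a, a) (b, b) :=
  fun _ => by simp only [Int.units_mul_self, and_self]

lemma pairWeight_div_pairWeight [Fintype ι] [LinearOrder ι] {χ : α → α → M} {i j : ι} (hij : i ⋖ j)
    {f g : ι → α} (hoff : ∀ k, k ≠ i → k ≠ j → f k = g k)
    (hcharge : SameCharge χ (f i, f j) (g i, g j)) :
    pairWeight χ f / pairWeight χ g = χ (f i) (f j) / χ (g i) (g j) := by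
  let ratio (u v : ι) : M := if u < v then χ (f u) (f v) / χ (g u) (g v) else 1
  have row_eq_one (u : ι) (hu : u ≠ i ∧ u ≠ j) : ∏ v, ratio u v = 1 := by
    have lt_iff : u < i ↔ u < j := ⟨hij.lt.trans', fun h => (hij.le_of_lt h).lt_of_ne hu.1⟩
    rw [Fintype.prod_eq_mul i j hij.ne fun v hv => by
      simp [ratio, hoff u hu.1 hu.2, hoff v hv.1 hv.2]]
    simp only [ratio, lt_iff, hoff u hu.1 hu.2]
    split_ifs
    · rw [div_mul_div_comm, (hcharge _).1, div_self']
    · rw [one_mul]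
  have column_eq_one (v : ι) (hv : v ≠ j) : ratio i v * ratio j v = 1 := by
    rcases eq_or_ne v i with rfl | hvi
    · simp [ratio, hij.lt.not_gt]
    have lt_iff : i < v ↔ j < v := ⟨fun h => (hij.ge_of_gt h).lt_of_ne' hv, hij.lt.trans⟩
    simp only [ratio, lt_iff, hoff v hvi hv]
    split_ifs
    · rw [div_mul_div_comm, (hcharge _).2, div_self']
    · rw [one_mul]
  calc pairWeight χ f / pairWeight χ g = ∏ u, ∏ v, ratio u v := by
        simp only [pairWeight, ratio, ← Finset.prod_div_distrib, ite_div_ite, div_one]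
    _ = ∏ v, ratio i v * ratio j v := by
        rw [Fintype.prod_eq_mul i j hij.ne row_eq_one, Finset.prod_mul_distrib]
    _ = ratio i j * ratio j j := Fintype.prod_eq_single j column_eq_one
    _ = χ (f i) (f j) / χ (g i) (g j) := by simp [ratio, hij.lt]

end PairWeight

section SignDiagonal

variable {m : Type*} [Fintype m] [DecidableEq m]

/-- The diagonal matrix with prescribed signs on the diagonal, as a monoid homomorphism. -/
def signDiagonal : (m → ℤˣ) →* Matrix m m ℂ where
  toFun d := diagonal fun x => ((d x : ℤ) : ℂ)
  map_one' := by simp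
  map_mul' d₁ d₂ := by simp

lemma signDiagonal_conj_apply (d : m → ℤˣ) (X : Matrix m m ℂ) (x y : m) :
    (signDiagonal d * X * signDiagonal d) x y = ((d x / d y : ℤˣ) : ℤ) * X x y := by
  rw [Int.units_div_eq_mul]
  simp [signDiagonal, mul_diagonal, diagonal_mul, mul_right_comm]

lemma twoSite_signDiagonal {ι α : Type*} [Fintype ι] [DecidableEq ι] [Fintype α] [DecidableEq α]
    {i j : ι} (hij : i ≠ j) (d : α × α → ℤˣ) :
    twoSite hij (signDiagonal d) = signDiagonal fun f => d (f i, f j) :=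
  twoSite_diagonal hij _

/-- The interactions of the two sites with the rest of the chain cancel, because `X` only connects
pairs of equal charge. -/
lemma signDiagonal_pairWeight_conj_twoSite {ι α : Type*} [Fintype ι] [LinearOrder ι] [Fintype α]
    [DecidableEq α] {χ : α → α → ℤˣ} {X : Matrix (α × α) (α × α) ℂ}
    (hX : ∀ p q, X p q ≠ 0 → SameCharge χ p q) {i j : ι} (hij : i ⋖ j) :
    signDiagonal (pairWeight χ) * twoSite hij.ne X * signDiagonal (pairWeight χ) =
      twoSite hij.ne (signDiagonal (fun p => χ p.1 p.2) * X * signDiagonal fun p => χ p.1 p.2) := by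
  ext f g
  simp only [signDiagonal_conj_apply, twoSite_apply]
  split_ifs with hoff
  · by_cases hzero : X (f i, f j) (g i, g j) = 0
    · rw [hzero, mul_zero, mul_zero]
    · rw [pairWeight_div_pairWeight hij hoff (hX _ _ hzero)]
  · rw [mul_zero]

end SignDiagonal

section PWave

lemma ketbra_apply (a b : Fin 3 → ℂ) (s t : Fin 3) : ketbra a b s t = a s * star (b t) :=
  rfl

lemma inv_sqrt_two_mul_self : ((√2 : ℝ) : ℂ)⁻¹ * ((√2 : ℝ) : ℂ)⁻¹ = 2⁻¹ := by
  rw [← mul_inv, ← ofReal_mul, Real.mul_self_sqrt zero_le_two, ofReal_ofNat]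

/-- The p-wave basis of `ℂ³`, in the order `|↑⟩, |↓⟩, |h⟩`. -/
def pWaveBasis : Fin 3 → Fin 3 → ℂ := ![up, down, hole]

/-- The unitary matrix whose columns are the p-wave basis vectors. -/
def pWaveUnitary : unitary (Matrix (Fin 3) (Fin 3) ℂ) where
  val := of fun s a => pWaveBasis a s
  property := by
    refine mem_unitaryGroup_iff'.mpr ?_
    ext a b
    fin_cases a <;> fin_cases b <;>
      simp [mul_apply, Fin.sum_univ_three, pWaveBasis, up, down, hole, inv_sqrt_two_mul_self,
        star_apply] <;> norm_num

/-- The one-site operator with a given matrix in the p-wave basis. -/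
def ofPWave : Matrix (Fin 3) (Fin 3) ℂ ≃⋆ₐ[ℂ] Matrix (Fin 3) (Fin 3) ℂ :=
  Unitary.conjStarAlgAut ℂ _ pWaveUnitary

lemma ofPWave_single (a b : Fin 3) :
    ofPWave (single a b 1) = ketbra (pWaveBasis a) (pWaveBasis b) := by
  rw [ofPWave, Unitary.conjStarAlgAut_apply, single_eq_single_vecMulVec_single, mul_vecMulVec,
    vecMulVec_mul, mulVec_single_one, single_one_vecMul]
  rfl

/-- The operator on the chain with a given matrix in the product p-wave basis. -/
def chainOfPWave (L : ℕ) : Op L ≃⋆ₐ[ℂ] Op L :=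
  Unitary.conjStarAlgAut ℂ _ ⟨tensorMatrix fun _ => pWaveUnitary.val, tensorMatrix_mem_unitary <| by
    rw [Unitary.mem_iff]
    exact ⟨funext fun _ => pWaveUnitary.2.1, funext fun _ => pWaveUnitary.2.2⟩⟩

lemma chainOfPWave_tensorMatrix {L : ℕ} (A : Fin L → Matrix (Fin 3) (Fin 3) ℂ) :
    chainOfPWave L (tensorMatrix A) = tensorMatrix fun k => ofPWave (A k) := by
  rw [chainOfPWave, Unitary.conjStarAlgAut_apply, star_tensorMatrix, ← tensorMatrix_mul,
    ← tensorMatrix_mul]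
  rfl

lemma site_eq_tensorMatrix {L : ℕ} (A : Matrix (Fin 3) (Fin 3) ℂ) (j : Fin L) :
    site A j = tensorMatrix (Pi.mulSingle j A) := by
  ext f g
  rw [site, tensorMatrix, of_apply, of_apply]
  refine Finset.prod_congr rfl fun k _ => ?_
  rcases eq_or_ne k j with rfl | hkj
  · simp
  · simp [hkj, one_apply]

lemma chainOfPWave_site {L : ℕ} (A : Matrix (Fin 3) (Fin 3) ℂ) (j : Fin L) :
    chainOfPWave L (site A j) = site (ofPWave A) j := by
  rw [site_eq_tensorMatrix, site_eq_tensorMatrix, chainOfPWave_tensorMatrix]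
  exact congrArg tensorMatrix <|
    funext (Pi.apply_mulSingle (fun _ => ofPWave) (fun _ => map_one ofPWave) j A)

lemma chainOfPWave_twoSite_kronecker {L : ℕ} {i j : Fin L} (hij : i ≠ j)
    (A B : Matrix (Fin 3) (Fin 3) ℂ) :
    chainOfPWave L (twoSite hij (A ⊗ₖ B)) = site (ofPWave A) i * site (ofPWave B) j := by
  rw [twoSite_kronecker, tensorMatrix_mul, ← site_eq_tensorMatrix, ← site_eq_tensorMatrix,
    map_mul, chainOfPWave_site, chainOfPWave_site]

end PWave
section Spin

/-- `Sˣ` in the p-wave basis. -/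
def pWaveSx : Matrix (Fin 3) (Fin 3) ℂ := single 1 2 1 + single 2 1 1

/-- `Sʸ` in the p-wave basis. -/
def pWaveSy : Matrix (Fin 3) (Fin 3) ℂ := (-I) • single 0 1 1 + I • single 1 0 1

/-- `Sᶻ` in the p-wave basis. -/
def pWaveSz : Matrix (Fin 3) (Fin 3) ℂ := single 0 2 1 + single 2 0 1

/-- `σˣ` in the p-wave basis. -/
def pWaveSigx : Matrix (Fin 3) (Fin 3) ℂ := single 0 1 1 + single 1 0 1

lemma ofPWave_pWaveSx : ofPWave pWaveSx = Sx := by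
  rw [pWaveSx, map_add, ofPWave_single, ofPWave_single]
  ext s t
  fin_cases s <;> fin_cases t <;> simp [ketbra_apply, pWaveBasis, down, hole, Sx]

lemma ofPWave_pWaveSigx : ofPWave pWaveSigx = sigx := by
  rw [pWaveSigx, map_add, ofPWave_single, ofPWave_single]
  rfl

lemma ofPWave_pWaveSy_eq_sigy : ofPWave pWaveSy = sigy := by
  rw [pWaveSy, map_add, map_smul, map_smul, ofPWave_single, ofPWave_single]
  rfl

lemma ofPWave_pWaveSy : ofPWave pWaveSy = Sy := by
  rw [ofPWave_pWaveSy_eq_sigy]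
  ext s t
  fin_cases s <;> fin_cases t <;> simp [ketbra_apply, up, down, sigy, Sy, mul_comm]

lemma ofPWave_pWaveSz : ofPWave pWaveSz = Sz := by
  rw [pWaveSz, map_add, ofPWave_single, ofPWave_single]
  ext s t
  fin_cases s <;> fin_cases t <;>
    simp [ketbra_apply, pWaveBasis, up, hole, Sz, inv_sqrt_two_mul_self] <;> norm_num

lemma pWaveSx_sq : pWaveSx ^ 2 = diagonal ![0, 1, 1] := by
  ext a b
  fin_cases a <;> fin_cases b <;> simp [pWaveSx, sq, mul_apply, single_apply]

lemma pWaveSz_sq : pWaveSz ^ 2 = diagonal ![1, 0, 1] := by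
  ext a b
  fin_cases a <;> fin_cases b <;> simp [pWaveSz, sq, mul_apply, single_apply]

lemma pWaveSx_pow_three : pWaveSx ^ 3 = pWaveSx := by
  rw [pow_succ, pWaveSx_sq]
  ext a b
  fin_cases a <;> fin_cases b <;> simp [pWaveSx, diagonal_mul]

lemma pWaveSz_pow_three : pWaveSz ^ 3 = pWaveSz := by
  rw [pow_succ, pWaveSz_sq]
  ext a b
  fin_cases a <;> fin_cases b <;> simp [pWaveSz, diagonal_mul]

end Spin

section KennedyTasaki

/-- The eigenvalue of `exp(iπ Sᶻ ⊗ Sˣ)` on a product of p-wave basis vectors: `Sᶻ` annihilates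
`|↓⟩`, `Sˣ` annihilates `|↑⟩`, and both square to `1` on the other basis vectors. -/
def ktSign (a b : Fin 3) : ℤˣ := if a = 1 ∨ b = 0 then 1 else -1

/-- The operator `exp(iπ Sᶻ ⊗ Sˣ)` of a single bond in the p-wave basis. -/
def ktBond : Matrix (Fin 3 × Fin 3) (Fin 3 × Fin 3) ℂ := signDiagonal fun p => ktSign p.1 p.2

lemma one_sub_two_smul_pWaveSz_kronecker_pWaveSx_sq :
    1 - (2 : ℂ) • (pWaveSz ⊗ₖ pWaveSx) ^ 2 = ktBond := by
  rw [kronecker_pow, pWaveSz_sq, pWaveSx_sq, diagonal_kronecker_diagonal, ← diagonal_one,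
    ← diagonal_smul, diagonal_sub]
  refine congrArg diagonal (funext fun ⟨a, b⟩ => ?_)
  fin_cases a <;> fin_cases b <;> norm_num [ktSign]

variable {L : ℕ}

open scoped Matrix.Norms.Operator in
lemma ktFactor_eq_chainOfPWave {u v : Fin L} (huv : u ≠ v) :
    ktFactor u v = chainOfPWave L (signDiagonal fun f => ktSign (f u) (f v)) := by
  let A := chainOfPWave L (twoSite huv (pWaveSz ⊗ₖ pWaveSx))
  have A_eq : site Sz u * site Sx v = A := by
    rw [← ofPWave_pWaveSz, ← ofPWave_pWaveSx, ← chainOfPWave_twoSite_kronecker huv]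
  have A_pow_three : A ^ 3 = A := by
    rw [← map_pow, ← map_pow, kronecker_pow, pWaveSz_pow_three, pWaveSx_pow_three]
  calc ktFactor u v = NormedSpace.exp ((Real.pi * I : ℂ) • A) := by rw [ktFactor, A_eq]
    _ = 1 - (2 : ℂ) • A ^ 2 := exp_pi_mul_I_smul_of_pow_three_eq_self A_pow_three
    _ = chainOfPWave L (twoSite huv (1 - (2 : ℂ) • (pWaveSz ⊗ₖ pWaveSx) ^ 2)) := by
        simp only [A, map_sub, map_one, map_smul, map_pow]
    _ = chainOfPWave L (signDiagonal fun f => ktSign (f u) (f v)) := by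
        rw [one_sub_two_smul_pWaveSz_kronecker_pWaveSx_sq, ktBond, twoSite_signDiagonal]

lemma UKT_eq_chainOfPWave : UKT L = chainOfPWave L (signDiagonal (pairWeight ktSign)) := by
  have pairWeight_eq : (pairWeight ktSign : (Fin L → Fin 3) → ℤˣ) =
      ∏ u, ∏ v, if u < v then fun f => ktSign (f u) (f v) else (1 : (Fin L → Fin 3) → ℤˣ) := by
    ext f
    simp only [pairWeight, Finset.prod_apply, apply_ite (fun c : (Fin L → Fin 3) → ℤˣ => c f),
      Pi.one_apply]
  rw [pairWeight_eq]
  simp only [UKT, Fin.prod_univ_def, map_list_prod, List.map_map, Function.comp_def]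
  congr! 5 with u
  funext v
  split_ifs with huv
  · exact ktFactor_eq_chainOfPWave huv.ne
  · rw [map_one, map_one]

end KennedyTasaki

section Bond

/-- The exchange of the two sites of a bond. -/
def exchange : Matrix (Fin 3 × Fin 3) (Fin 3 × Fin 3) ℂ :=
  Equiv.Perm.permMatrix ℂ (Equiv.prodComm (Fin 3) (Fin 3))

/-- The spin singlet `|↑↑⟩ + |↓↓⟩ − |hh⟩` of a bond, unnormalized, in the p-wave basis. -/
def singlet : Fin 3 × Fin 3 → ℂ := fun p => if p.1 = p.2 then ![1, 1, -1] p.1 else 0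

/-- The operator `|s⟩⟨s|` of a bond, for the unnormalized singlet `|s⟩`. -/
def singletKetbra : Matrix (Fin 3 × Fin 3) (Fin 3 × Fin 3) ℂ := vecMulVec singlet singlet

lemma exchange_mul_self : exchange * exchange = 1 := by
  rw [exchange, ← permMatrix_mul]
  exact permMatrix_one

lemma singlet_comp_swap : singlet ∘ Prod.swap = singlet := by
  funext ⟨a, b⟩
  rcases eq_or_ne a b with rfl | hab
  · rfl
  · simp [singlet, hab, hab.symm]

lemma exchange_mul_singletKetbra : exchange * singletKetbra = singletKetbra := by
  rw [singletKetbra, mul_vecMulVec, exchange, permMatrix_mulVec]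
  exact congrArg (vecMulVec · singlet) singlet_comp_swap

lemma singletKetbra_mul_exchange : singletKetbra * exchange = singletKetbra := by
  rw [singletKetbra, vecMulVec_mul, exchange, vecMul_permMatrix]
  exact congrArg (vecMulVec singlet) singlet_comp_swap

lemma singlet_dotProduct_self : singlet ⬝ᵥ singlet = 3 := by
  simp [dotProduct, Fintype.sum_prod_type, Fin.sum_univ_three, singlet, one_add_one_eq_two,
    two_add_one_eq_three]

lemma singletKetbra_mul_self : singletKetbra * singletKetbra = (3 : ℂ) • singletKetbra := by
  rw [singletKetbra, vecMulVec_mul_vecMulVec, singlet_dotProduct_self, vecMulVec_smul]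

lemma exchange_sub_singletKetbra_sq :
    (exchange - singletKetbra) ^ 2 = 1 + singletKetbra := by
  rw [sq, sub_mul, mul_sub, mul_sub, exchange_mul_self, exchange_mul_singletKetbra,
    singletKetbra_mul_exchange, singletKetbra_mul_self]
  module

lemma spin_kronecker_eq_exchange_sub_singletKetbra :
    pWaveSx ⊗ₖ pWaveSx + pWaveSy ⊗ₖ pWaveSy + pWaveSz ⊗ₖ pWaveSz =
      exchange - singletKetbra := by
  ext ⟨a, b⟩ ⟨c, d⟩
  fin_cases a <;> fin_cases b <;> fin_cases c <;> fin_cases d <;>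
    simp [pWaveSx, pWaveSy, pWaveSz, exchange, singletKetbra, singlet,
      vecMulVec_apply, PEquiv.toMatrix_apply]

/-- The hopping `|↑h⟩⟨h↑| + |↓h⟩⟨h↓| + h.c.` of a hole across a bond, in the p-wave basis. -/
def holeHopping : Matrix (Fin 3 × Fin 3) (Fin 3 × Fin 3) ℂ :=
  single 0 2 1 ⊗ₖ single 2 0 1 + single 1 2 1 ⊗ₖ single 2 1 1 +
    single 2 0 1 ⊗ₖ single 0 2 1 + single 2 1 1 ⊗ₖ single 1 2 1

/-- The pair conversion `|↑↑⟩⟨hh| + |↓↓⟩⟨hh| + h.c.` on a bond, in the p-wave basis. -/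
def holePairing : Matrix (Fin 3 × Fin 3) (Fin 3 × Fin 3) ℂ :=
  single 0 2 1 ⊗ₖ single 0 2 1 + single 1 2 1 ⊗ₖ single 1 2 1 +
    single 2 0 1 ⊗ₖ single 2 0 1 + single 2 1 1 ⊗ₖ single 2 1 1

lemma ktBond_mul_self : ktBond * ktBond = 1 := by
  rw [ktBond, ← map_mul, ← map_one signDiagonal]
  exact congrArg signDiagonal (funext fun _ => Int.units_mul_self _)

lemma ktBond_conj_exchange :
    ktBond * exchange * ktBond =
      exchange - (pWaveSigx ⊗ₖ pWaveSigx + pWaveSy ⊗ₖ pWaveSy) - (2 : ℂ) • holeHopping := by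
  ext ⟨a, b⟩ ⟨c, d⟩
  rw [ktBond, signDiagonal_conj_apply]
  fin_cases a <;> fin_cases b <;> fin_cases c <;> fin_cases d <;>
    simp [pWaveSigx, pWaveSy, holeHopping, ktSign, exchange, PEquiv.toMatrix_apply] <;> norm_num

lemma ktBond_conj_singletKetbra :
    ktBond * singletKetbra * ktBond = singletKetbra + (2 : ℂ) • holePairing := by
  ext ⟨a, b⟩ ⟨c, d⟩
  rw [ktBond, signDiagonal_conj_apply]
  fin_cases a <;> fin_cases b <;> fin_cases c <;> fin_cases d <;>
    simp [holePairing, ktSign, singletKetbra, singlet, vecMulVec_apply] <;> norm_num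

end Bond

section BondHamiltonian

/-- The bond Hamiltonian `c (S_i·S_j) + s (S_i·S_j)²` of a bond in the p-wave basis. -/
def blbqBond (c s : ℂ) : Matrix (Fin 3 × Fin 3) (Fin 3 × Fin 3) ℂ :=
  c • (exchange - singletKetbra) + s • (1 + singletKetbra)

lemma sameCharge_of_blbqBond_ne_zero (χ : Fin 3 → Fin 3 → ℤˣ) {c s : ℂ} {p q : Fin 3 × Fin 3}
    (hpq : blbqBond c s p q ≠ 0) : SameCharge χ p q := by
  by_cases heq : p = q
  · exact heq ▸ fun _ => ⟨rfl, rfl⟩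
  by_cases hswap : p.swap = q
  · exact hswap ▸ sameCharge_swap χ p
  by_cases hdiag : p.1 = p.2 ∧ q.1 = q.2
  · obtain ⟨⟨a, a₂⟩, ⟨b, b₂⟩⟩ := p, q
    obtain ⟨rfl : a = a₂, rfl : b = b₂⟩ := hdiag
    exact sameCharge_diagonal χ a b
  have exchange_eq_zero : exchange p q = 0 := by
    simp [exchange, PEquiv.toMatrix_apply, hswap]
  have singletKetbra_eq_zero : singletKetbra p q = 0 := by
    rw [singletKetbra, vecMulVec_apply, singlet, singlet, ite_zero_mul_ite_zero, if_neg hdiag]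
  exact absurd (by simp [blbqBond, exchange_eq_zero, singletKetbra_eq_zero, heq]) hpq

lemma ktBond_conj_blbqBond (c s : ℂ) :
    ktBond * blbqBond c s * ktBond =
      blbqBond c s - c • (pWaveSigx ⊗ₖ pWaveSigx + pWaveSy ⊗ₖ pWaveSy) -
        (2 * c) • holeHopping - (2 * (c - s)) • holePairing := by
  simp only [blbqBond, mul_add, add_mul, mul_sub, sub_mul, mul_smul_comm, smul_mul_assoc,
    mul_one,
    ktBond_mul_self, ktBond_conj_exchange, ktBond_conj_singletKetbra]
  module

variable {L : ℕ} {i j : Fin L}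

lemma heis_eq_chainOfPWave (hij : i ≠ j) :
    heis i j = chainOfPWave L (twoSite hij (exchange - singletKetbra)) := by
  simp only [← spin_kronecker_eq_exchange_sub_singletKetbra, map_add,
    chainOfPWave_twoSite_kronecker, ofPWave_pWaveSx, ofPWave_pWaveSy, ofPWave_pWaveSz, heis]

lemma smul_heis_add_smul_heis_sq_eq_chainOfPWave (hij : i ≠ j) (c s : ℂ) :
    c • heis i j + s • heis i j ^ 2 = chainOfPWave L (twoSite hij (blbqBond c s)) := by
  rw [heis_eq_chainOfPWave hij, ← map_pow, ← map_pow, exchange_sub_singletKetbra_sq, ← map_smul,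
    ← map_smul, ← map_smul, ← map_smul, ← map_add, ← map_add, blbqBond]

lemma UKT_conj_chainOfPWave_twoSite_blbqBond (hij : i ⋖ j) (c s : ℂ) :
    UKT L * chainOfPWave L (twoSite hij.ne (blbqBond c s)) * UKT L =
      chainOfPWave L (twoSite hij.ne (ktBond * blbqBond c s * ktBond)) := by
  rw [UKT_eq_chainOfPWave, ← map_mul, ← map_mul,
    signDiagonal_pairWeight_conj_twoSite (fun _ _ => sameCharge_of_blbqBond_ne_zero ktSign) hij,
    ktBond]

lemma UKT_conj_bond_sub_bond (hij : i ⋖ j) (c s : ℂ) :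
    UKT L * (c • heis i j + s • heis i j ^ 2) * UKT L - (c • heis i j + s • heis i j ^ 2) =
      (-c) • (site sigx i * site sigx j + site sigy i * site sigy j)
        - (2 * c) • (site (ketbra up hole) i * site (ketbra hole up) j
          + site (ketbra down hole) i * site (ketbra hole down) j
          + site (ketbra hole up) i * site (ketbra up hole) j
          + site (ketbra hole down) i * site (ketbra down hole) j)
        - (2 * (c - s)) • (site (ketbra up hole) i * site (ketbra up hole) j
          + site (ketbra down hole) i * site (ketbra down hole) j
          + site (ketbra hole up) i * site (ketbra hole up) j
          + site (ketbra hole down) i * site (ketbra hole down) j) := by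
  rw [smul_heis_add_smul_heis_sq_eq_chainOfPWave hij.ne, UKT_conj_chainOfPWave_twoSite_blbqBond hij,
    ktBond_conj_blbqBond]
  simp only [holeHopping, holePairing, map_sub, map_add, map_smul, chainOfPWave_twoSite_kronecker,
    ofPWave_pWaveSigx, ofPWave_pWaveSy_eq_sigy, ofPWave_single, pWaveBasis, cons_val]
  module

end BondHamiltonian

/-- The perturbation `H_pert(θ) = U_KT H_BLBQ(θ) U_KT − H_BLBQ(θ)` satisfies the
exact identity stated in the p-wave basis (each two-site ket-bra `|ab⟩⟨cd|_{j,j+1}` factorizes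
as `(|a⟩⟨c|)_j (|b⟩⟨d|)_{j+1}`). -/
theorem Hpert_exact_identity (L : ℕ) (hL : 2 ≤ L) (θ : ℝ) :
    UKT L * HBLBQ L θ * UKT L - HBLBQ L θ =
      (-((Real.cos θ : ℝ) : ℂ)) •
          (∑ j : Fin L, if h : (j : ℕ) + 1 < L then
            site sigx j * site sigx ⟨(j : ℕ) + 1, h⟩
              + site sigy j * site sigy ⟨(j : ℕ) + 1, h⟩
          else 0)
        - (2 * ((Real.cos θ : ℝ) : ℂ)) •
          (∑ j : Fin L, if h : (j : ℕ) + 1 < L then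
            site (ketbra up hole) j * site (ketbra hole up) ⟨(j : ℕ) + 1, h⟩
              + site (ketbra down hole) j * site (ketbra hole down) ⟨(j : ℕ) + 1, h⟩
              + site (ketbra hole up) j * site (ketbra up hole) ⟨(j : ℕ) + 1, h⟩
              + site (ketbra hole down) j * site (ketbra down hole) ⟨(j : ℕ) + 1, h⟩
          else 0)
        - (2 * (((Real.cos θ - Real.sin θ : ℝ)) : ℂ)) •
          (∑ j : Fin L, if h : (j : ℕ) + 1 < L then
            site (ketbra up hole) j * site (ketbra up hole) ⟨(j : ℕ) + 1, h⟩
              + site (ketbra down hole) j * site (ketbra down hole) ⟨(j : ℕ) + 1, h⟩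
              + site (ketbra hole up) j * site (ketbra hole up) ⟨(j : ℕ) + 1, h⟩
              + site (ketbra hole down) j * site (ketbra hole down) ⟨(j : ℕ) + 1, h⟩
          else 0) := by
  rw [HBLBQ, Finset.mul_sum, Finset.sum_mul, ← Finset.sum_sub_distrib, Finset.smul_sum,
    Finset.smul_sum, Finset.smul_sum, ← Finset.sum_sub_distrib, ← Finset.sum_sub_distrib]
  refine Finset.sum_congr rfl fun j _ => ?_
  by_cases h : (j : ℕ) + 1 < L
  · have hcovBy : j ⋖ ⟨(j : ℕ) + 1, h⟩ :=
      (Order.covBy_add_one (j : ℕ)).of_image (Fin.valOrderEmb L)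
    simp only [dif_pos h]
    rw [UKT_conj_bond_sub_bond hcovBy, ofReal_sub]
  · simp [dif_neg h]

end
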